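/- Assume α > 1, λ is nondecreasing on [t₀,∞), b(t) > β'(t) + β(t)/t (equivalently w(t) > 0) for every t ≥ t₀, and there exists ε ∈ (0, α−1) such that (α−3)·w(t) − t·w'(t) ≥ ε·b(t) for every t ≥ t₀. Then ∫_{t₀}^{∞} t·‖ẋ(t)‖² dt < +∞. -/

import Mathlib

open Set MeasureTheory Filter Real

noncomputable section

/-- Convexity for extended-real-valued functions. -/
def EConvexOn {H : Type*} [NormedAddCommGroup H] [NormedSpace ℝ H] (f : H → EReal) : Prop :=
  ∀ x y : H, ∀ a c : ℝ, 0 ≤ a → 0 ≤ c → a + c = 1 →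
    f (a • x + c • y) ≤ (a : EReal) * f x + (c : EReal) * f y

/-- `p` is the proximal point of `f` with parameter `l` at `x`, i.e. the (unique) minimizer of
`y ↦ f y + ‖x - y‖² / (2l)`. -/
def IsProxPt {H : Type*} [NormedAddCommGroup H] [InnerProductSpace ℝ H]
    (f : H → EReal) (l : ℝ) (x p : H) : Prop :=
  ∀ y : H, f p + ((‖x - p‖ ^ 2 / (2 * l) : ℝ) : EReal)
      ≤ f y + ((‖x - y‖ ^ 2 / (2 * l) : ℝ) : EReal)

/-- The Moreau envelope of `f` with parameter `l` (as a real number). -/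
def moreau {H : Type*} [NormedAddCommGroup H] [InnerProductSpace ℝ H]
    (f : H → EReal) (l : ℝ) (x : H) : ℝ :=
  (⨅ y : H, f y + ((‖x - y‖ ^ 2 / (2 * l) : ℝ) : EReal)).toReal


lemma prox_ne_top {H : Type*} [NormedAddCommGroup H] [InnerProductSpace ℝ H]
    (Φ : H → EReal) (l : ℝ) (x p z : H) (hz : Φ z ≠ ⊤)
    (hp : IsProxPt Φ l x p) : Φ p ≠ ⊤ := by
  intro h
  have h1 := hp z
  rw [h, EReal.top_add_coe, top_le_iff] at h1
  exact (EReal.add_lt_top hz (EReal.coe_ne_top _)).ne h1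

lemma prox_real {H : Type*} [NormedAddCommGroup H] [InnerProductSpace ℝ H]
    (Φ : H → EReal) (hΦbot : ∀ y, Φ y ≠ ⊥) (l : ℝ) (x p y : H) (hy : Φ y ≠ ⊤)
    (hp : IsProxPt Φ l x p) :
    (Φ p).toReal + ‖x - p‖ ^ 2 / (2 * l) ≤ (Φ y).toReal + ‖x - y‖ ^ 2 / (2 * l) := by
  have h1 := hp y
  have hpt := prox_ne_top Φ l x p y hy hp
  rw [← EReal.coe_toReal hpt (hΦbot p), ← EReal.coe_toReal hy (hΦbot y)] at h1
  exact_mod_cast h1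

lemma prox_subgrad {H : Type*} [NormedAddCommGroup H] [InnerProductSpace ℝ H]
    (Φ : H → EReal) (hΦbot : ∀ y, Φ y ≠ ⊥) (hc : EConvexOn Φ) (l : ℝ) (hl : 0 < l)
    (x p y : H) (hy : Φ y ≠ ⊤)
    (hp : IsProxPt Φ l x p) :
    (Φ p).toReal + inner ℝ (l⁻¹ • (x - p)) (y - p) ≤ (Φ y).toReal := by
  have hpt := prox_ne_top Φ l x p y hy hp
  have key : ∀ s : ℝ, 0 < s → s ≤ 1 →
      (Φ p).toReal + inner ℝ (l⁻¹ • (x - p)) (y - p)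
        ≤ (Φ y).toReal + s * (‖y - p‖ ^ 2 / (2 * l)) := by
    intro s hs hs1
    have h1 := hc p y (1 - s) s (by linarith) hs.le (by ring)
    rw [← EReal.coe_toReal hpt (hΦbot p), ← EReal.coe_toReal hy (hΦbot y)] at h1
    have hq : Φ ((1 - s) • p + s • y) ≠ ⊤ := by
      intro h
      rw [h, top_le_iff] at h1
      exact EReal.coe_ne_top _ (by exact_mod_cast h1)
    rw [← EReal.coe_toReal hq (hΦbot _)] at h1
    have h1' : (Φ ((1 - s) • p + s • y)).toReal
        ≤ (1 - s) * (Φ p).toReal + s * (Φ y).toReal := by exact_mod_cast h1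
    have h2 := prox_real Φ hΦbot l x p _ hq hp
    have h3 : x - ((1 - s) • p + s • y) = (x - p) - s • (y - p) := by module
    rw [h3, norm_sub_sq_real (x - p), norm_smul, inner_smul_right, mul_pow, Real.norm_eq_abs, sq_abs] at h2
    rw [inner_smul_left]
    simp only [RCLike.conj_to_real]
    set I : ℝ := inner ℝ (x - p) (y - p)
    have h4 : (‖x - p‖ ^ 2 - 2 * (s * I) + s ^ 2 * ‖y - p‖ ^ 2) / (2 * l)
      = ‖x - p‖ ^ 2 / (2 * l) - s * (l⁻¹ * I) + s * (s * (‖y - p‖ ^ 2 / (2 * l))) := by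
      field_simp
    rw [h4] at h2
    refine le_of_mul_le_mul_left ?_ hs
    nlinarith
  have hlim : Tendsto (fun s : ℝ => (Φ y).toReal + s * (‖y - p‖ ^ 2 / (2 * l)))
      (nhdsWithin 0 (Ioi 0)) (nhds ((Φ y).toReal)) := by
    have : Continuous (fun s : ℝ => (Φ y).toReal + s * (‖y - p‖ ^ 2 / (2 * l))) := by fun_prop
    have h := this.tendsto 0
    simp only [zero_mul, add_zero] at h
    exact h.mono_left nhdsWithin_le_nhds
  refine ge_of_tendsto hlim ?_
  filter_upwards [Ioc_mem_nhdsGT (zero_lt_one : (0:ℝ) < 1)] with s hs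
  exact key s hs.1 hs.2

lemma squeeze_deriv {f m M : ℝ → ℝ} {d t : ℝ} {S : Set ℝ} (ht : t ∈ S)
    (hm : HasDerivWithinAt m d S t) (hM : HasDerivWithinAt M d S t)
    (h1 : ∀ s ∈ S, m s ≤ f s) (h2 : ∀ s ∈ S, f s ≤ M s) (e1 : m t = f t) (e2 : M t = f t) :
    HasDerivWithinAt f d S t := by
  rw [hasDerivWithinAt_iff_isLittleO, Asymptotics.isLittleO_iff] at *
  intro c hc
  filter_upwards [hm hc, hM hc, self_mem_nhdsWithin] with s a1 a2 hs
  have b1 := h1 s hs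
  have b2 := h2 s hs
  rw [Real.norm_eq_abs] at *
  rw [abs_le] at *
  rw [e1] at a1
  rw [e2] at a2
  constructor <;> linarith [a1.1, a2.2]

lemma env_deriv {H : Type*} [NormedAddCommGroup H] [InnerProductSpace ℝ H]
    (Φ : H → EReal) (hΦbot : ∀ y, Φ y ≠ ⊥) (hc : EConvexOn Φ) (t₀ : ℝ)
    (z : H) (hz : Φ z ≠ ⊤)
    (lam lam' : ℝ → ℝ) (x v p g G' : ℝ → H)
    (hg : ∀ s, g s = (lam s)⁻¹ • (x s - p s))
    (hlampos : ∀ t ≥ t₀, 0 < lam t)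
    (hlam' : ∀ t ≥ t₀, HasDerivAt lam (lam' t) t)
    (hx : ∀ t ≥ t₀, HasDerivAt x (v t) t)
    (hp : ∀ t ≥ t₀, IsProxPt Φ (lam t) (x t) (p t))
    (hG' : ∀ t ≥ t₀, HasDerivAt g (G' t) t) (t : ℝ) (ht : t₀ ≤ t) :
    HasDerivWithinAt (fun s => (Φ (p s)).toReal + ‖x s - p s‖ ^ 2 / (2 * lam s))
      (inner ℝ (g t) (v t) - lam' t / 2 * ‖g t‖ ^ 2) (Ici t₀) t := by
  have hxp : ∀ s ≥ t₀, x s - p s = lam s • g s := by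
    intro s hs
    rw [hg, smul_inv_smul₀ (hlampos s hs).ne']
  have hpt : ∀ s ≥ t₀, Φ (p s) ≠ ⊤ := fun s hs => prox_ne_top Φ _ _ _ z hz (hp s hs)
  have hl := hlampos t ht
  have dl := (hlam' t ht).hasDerivWithinAt (s := Ici t₀)
  have dx := (hx t ht).hasDerivWithinAt (s := Ici t₀)
  have dg := (hG' t ht).hasDerivWithinAt (s := Ici t₀)
  refine squeeze_deriv (S := Ici t₀)
    (m := fun s => (Φ (p t)).toReal + inner ℝ (g t) ((x s - lam s • g s) - p t)
      + lam s / 2 * ‖g s‖ ^ 2)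
    (M := fun s => (Φ (p t)).toReal + ‖x s - p t‖ ^ 2 / (2 * lam s)) ht ?_ ?_ ?_ ?_ ?_ ?_
  · have d1 := ((hasDerivWithinAt_const t (Ici t₀) (g t)).inner ℝ
      ((dx.sub (dl.smul dg)).sub_const (p t)))
    have d2 := (d1.const_add ((Φ (p t)).toReal)).add ((dl.div_const 2).mul dg.norm_sq)
    refine HasDerivWithinAt.congr_deriv d2 ?_
    simp only [inner_sub_right, inner_add_right, inner_smul_right, inner_zero_left,
      real_inner_self_eq_norm_sq]
    ring
  · have d1 := ((dx.sub_const (p t)).norm_sq.div (dl.const_mul 2) (by positivity)).const_add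
      ((Φ (p t)).toReal)
    refine HasDerivWithinAt.congr_deriv d1 ?_
    rw [hxp t ht, norm_smul, inner_smul_left, Real.norm_eq_abs, mul_pow, sq_abs]
    simp only [RCLike.conj_to_real]
    field_simp
  · intro s hs
    have hs' : t₀ ≤ s := hs
    have h := prox_subgrad Φ hΦbot hc _ hl (x t) (p t) (p s) (hpt s hs) (hp t ht)
    rw [← hg] at h
    have e : x s - lam s • g s = p s := by rw [← hxp s hs]; abel
    have e2 : ‖x s - p s‖ ^ 2 / (2 * lam s) = lam s / 2 * ‖g s‖ ^ 2 := by
      have := hlampos s hs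
      rw [hxp s hs, norm_smul, Real.norm_eq_abs, mul_pow, sq_abs]
      field_simp
    simp only [e, e2]
    linarith
  · intro s hs
    exact prox_real Φ hΦbot _ _ _ _ (hpt t ht) (hp s hs)
  · have e : x t - lam t • g t = p t := by rw [← hxp t ht]; abel
    have e2 : ‖x t - p t‖ ^ 2 / (2 * lam t) = lam t / 2 * ‖g t‖ ^ 2 := by
      rw [hxp t ht, norm_smul, Real.norm_eq_abs, mul_pow, sq_abs]
      field_simp
    simp only [e, e2, sub_self, inner_zero_right, add_zero]
  · rfl

theorem velocity_integral_finite
    {H : Type*} [NormedAddCommGroup H] [InnerProductSpace ℝ H] [CompleteSpace H]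
    (Φ : H → EReal)
    (hΦbot : ∀ y, Φ y ≠ ⊥) (hΦproper : ∃ y, Φ y ≠ ⊤)
    (hΦconv : EConvexOn Φ) (hΦlsc : LowerSemicontinuous Φ)
    (t₀ α : ℝ) (ht₀ : 0 < t₀)
    (β b lam β' b' lam' w' : ℝ → ℝ)
    (hβnonneg : ∀ t ≥ t₀, 0 ≤ β t)
    (hbpos : ∀ t ≥ t₀, 0 < b t)
    (hlampos : ∀ t ≥ t₀, 0 < lam t)
    (hβ' : ∀ t ≥ t₀, HasDerivAt β (β' t) t)
    (hb' : ∀ t ≥ t₀, HasDerivAt b (b' t) t)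
    (hlam' : ∀ t ≥ t₀, HasDerivAt lam (lam' t) t)
    (hw' : ∀ t ≥ t₀, HasDerivAt (fun s => b s - β' s - β s / s) (w' t) t)
    (x v acc p G' : ℝ → H)
    (hx : ∀ t ≥ t₀, HasDerivAt x (v t) t)
    (hv : ∀ t ≥ t₀, HasDerivAt v (acc t) t)
    (hp : ∀ t ≥ t₀, IsProxPt Φ (lam t) (x t) (p t))
    (hG' : ∀ t ≥ t₀, HasDerivAt (fun s => (lam s)⁻¹ • (x s - p s)) (G' t) t)
    (hode : ∀ t ≥ t₀, acc t + (α / t) • v t + β t • G' t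
        + b t • ((lam t)⁻¹ • (x t - p t)) = 0)
    (hα : 1 < α)
    (hlammono : MonotoneOn lam (Set.Ici t₀))
    (hw : ∀ t ≥ t₀, β' t + β t / t < b t)
    (hAs2 : ∃ ε, 0 < ε ∧ ε < α - 1 ∧
      ∀ t ≥ t₀, ε * b t ≤ (α - 3) * (b t - β' t - β t / t) - t * w' t)
    (hargmin : ∃ z, ∀ y, Φ z ≤ Φ y)
    :
    ∫⁻ t in Set.Ici t₀, ENNReal.ofReal (t * ‖v t‖ ^ 2) < ⊤ := by
  obtain ⟨ε, hε, hεα, hA⟩ := hAs2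
  obtain ⟨z, hz⟩ := hargmin
  have hzt : Φ z ≠ ⊤ := by
    obtain ⟨y, hy⟩ := hΦproper
    exact ne_top_of_le_ne_top hy (hz y)
  obtain ⟨g, hg⟩ : ∃ g : ℝ → H, ∀ s, g s = (lam s)⁻¹ • (x s - p s) := ⟨_, fun _ => rfl⟩
  have hgG : ∀ t ≥ t₀, HasDerivAt g (G' t) t := by
    have : g = fun s => (lam s)⁻¹ • (x s - p s) := funext hg
    rw [this]; exact hG'
  obtain ⟨W, hW⟩ : ∃ W : ℝ → ℝ, ∀ s, W s = b s - β' s - β s / s := ⟨_, fun _ => rfl⟩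
  have hWd : ∀ t ≥ t₀, HasDerivAt W (w' t) t := by
    have : W = fun s => b s - β' s - β s / s := funext hW
    rw [this]; exact hw'
  obtain ⟨φ, hφ⟩ : ∃ φ : ℝ → ℝ, ∀ s, φ s =
    (Φ (p s)).toReal + ‖x s - p s‖ ^ 2 / (2 * lam s) - (Φ z).toReal := ⟨_, fun _ => rfl⟩
  have hφd : ∀ t ≥ t₀, HasDerivWithinAt φ
      (inner ℝ (g t) (v t) - lam' t / 2 * ‖g t‖ ^ 2) (Ici t₀) t := by
    intro t ht
    rw [funext hφ]
    exact (env_deriv Φ hΦbot hΦconv t₀ z hzt lam lam' x v p g G' hg hlampos hlam' hx hp hgG t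
      ht).sub_const _
  have hxp : ∀ s ≥ t₀, x s - p s = lam s • g s := by
    intro s hs
    rw [hg, smul_inv_smul₀ (hlampos s hs).ne']
  have hpt : ∀ s ≥ t₀, Φ (p s) ≠ ⊤ := fun s hs => prox_ne_top Φ _ _ _ z hzt (hp s hs)
  have hφ0 : ∀ t ≥ t₀, 0 ≤ φ t := by
    intro t ht
    have h1 : (Φ z).toReal ≤ (Φ (p t)).toReal :=
      EReal.toReal_le_toReal (hz _) (hΦbot z) (hpt t ht)
    have := hlampos t ht
    have h2 : 0 ≤ ‖x t - p t‖ ^ 2 / (2 * lam t) := by positivity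
    rw [hφ]; linarith
  have hK : ∀ t ≥ t₀, φ t ≤ inner ℝ (g t) (x t - z) := by
    intro t ht
    have hl := hlampos t ht
    have h := prox_subgrad Φ hΦbot hΦconv _ hl (x t) (p t) z hzt (hp t ht)
    rw [← hg] at h
    have e : z - p t = lam t • g t - (x t - z) := by rw [← hxp t ht]; abel
    rw [e, inner_sub_right, inner_smul_right, real_inner_self_eq_norm_sq] at h
    have e2 : ‖x t - p t‖ ^ 2 / (2 * lam t) = lam t / 2 * ‖g t‖ ^ 2 := by
      rw [hxp t ht, norm_smul, Real.norm_eq_abs, mul_pow, sq_abs]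
      field_simp
    rw [hφ, e2]
    have : 0 ≤ lam t * ‖g t‖ ^ 2 := by positivity
    linarith
  have hl0 : ∀ t ≥ t₀, 0 ≤ lam' t := by
    intro t ht
    have h1 : derivWithin lam (Ici t₀) t = lam' t :=
      (hlam' t ht).hasDerivWithinAt.derivWithin (uniqueDiffOn_Ici t₀ t ht)
    rw [← h1]
    exact hlammono.derivWithin_nonneg
  set c : ℝ := α - 1 - ε with hcdef
  have hc : 0 < c := by linarith
  obtain ⟨u, hu⟩ : ∃ u : ℝ → H, ∀ s, u s = c • (x s - z) + s • v s + (s * β s) • g s :=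
    ⟨_, fun _ => rfl⟩
  have hud : ∀ t ≥ t₀, HasDerivAt u (-ε • v t - (t * W t) • g t) t := by
    intro t ht
    have htp : 0 < t := lt_of_lt_of_le ht₀ ht
    have h := ((((hx t ht).sub_const z).const_smul c).add ((hasDerivAt_id t).smul (hv t ht))).add
      (((hasDerivAt_id t).mul (hβ' t ht)).smul (hgG t ht))
    rw [funext hu]
    refine HasDerivAt.congr_deriv h ?_
    have ho := hode t ht
    rw [← hg] at ho
    have ha : acc t = -((α / t) • v t) - β t • G' t - b t • g t := by
      rw [← sub_eq_zero, ← ho]; abel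
    rw [ha, hW, hcdef]
    simp only [id, Pi.mul_apply]
    match_scalars <;> field_simp <;> ring
  obtain ⟨E, hE⟩ : ∃ E : ℝ → ℝ, ∀ s, E s = (s ^ 2 * W s + ε * (s * β s)) * φ s
      + 1 / 2 * ‖u s‖ ^ 2 + c * ε / 2 * ‖x s - z‖ ^ 2 := ⟨_, fun _ => rfl⟩
  have hWpos : ∀ t ≥ t₀, 0 < W t := by
    intro t ht
    rw [hW]; linarith [hw t ht]
  have hE0 : ∀ t ≥ t₀, 0 ≤ E t := by
    intro t ht
    have htp : 0 < t := lt_of_lt_of_le ht₀ ht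
    have := hWpos t ht
    have := hβnonneg t ht
    have := hφ0 t ht
    rw [hE]; positivity
  have hEd : ∀ t ≥ t₀, ∃ d, HasDerivWithinAt E d (Ici t₀) t ∧ ε * (t * ‖v t‖ ^ 2) ≤ -d := by
    intro t ht
    have htp : 0 < t := lt_of_lt_of_le ht₀ ht
    have hcoef := ((((hasDerivAt_id t).pow 2).mul (hWd t ht)).add
      (((hasDerivAt_id t).mul (hβ' t ht)).const_mul ε)).hasDerivWithinAt (s := Ici t₀)
    have h := ((hcoef.mul (hφd t ht)).add
      ((hud t ht).hasDerivWithinAt.norm_sq.const_mul (1 / 2))).add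
      (((hx t ht).sub_const z).hasDerivWithinAt.norm_sq.const_mul (c * ε / 2))
    refine ⟨_, (h.congr_of_mem (fun s _ => ?_) ht), ?_⟩
    · rw [hE]; rfl
    · rw [hu]
      simp only [Pi.add_apply, Pi.mul_apply, Pi.pow_apply, id, inner_sub_right, inner_add_right,
        inner_smul_right, inner_add_left, inner_smul_left, inner_neg_right, neg_smul,
        real_inner_self_eq_norm_sq, RCLike.conj_to_real]
      have hKt := hK t ht
      rw [real_inner_comm] at hKt
      have c1 : inner ℝ (v t) (g t) = (inner ℝ (g t) (v t) : ℝ) := real_inner_comm _ _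
      rw [c1]
      set A : ℝ := inner ℝ (g t) (v t)
      set K : ℝ := inner ℝ (x t - z) (g t)
      set J : ℝ := inner ℝ (x t - z) (v t)
      have hAt := hA t ht
      rw [← hW] at hAt
      have hWt := hWpos t ht
      have hβt := hβnonneg t ht
      have hφt := hφ0 t ht
      have hlt := hl0 t ht
      have hb1 : β t + t * β' t = t * (b t - W t) := by
        rw [hW]; field_simp; ring
      have p1 : 0 ≤ c * (t * W t) * (K - φ t) :=
        mul_nonneg (by positivity) (by linarith)
      have p2 : 0 ≤ t ^ 2 * W t * β t * ‖g t‖ ^ 2 := by positivity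
      have p3 : 0 ≤ (t ^ 2 * W t + ε * (t * β t)) * (lam' t / 2 * ‖g t‖ ^ 2) := by positivity
      have p4 : 0 ≤ t * φ t * ((α - 3) * W t - t * w' t - ε * b t) :=
        mul_nonneg (by positivity) (by linarith)
      have p5 : ε * φ t * (β t + t * β' t) = ε * φ t * (t * (b t - W t)) := by rw [hb1]
      have hα' : α = c + 1 + ε := by rw [hcdef]; ring
      rw [hα'] at p4
      push_cast
      ring_nf at p1 p2 p3 p4 p5 ⊢
      linarith
  choose! d hd1 hd2 using hEd
  have hvc : ContinuousOn (fun t => t * ‖v t‖ ^ 2) (Ici t₀) := by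
    intro t ht
    have := (hv t ht).continuousAt
    exact (ContinuousAt.mul continuousAt_id (this.norm.pow 2)).continuousWithinAt
  have hbound : ∀ T ≥ t₀, ∫ t in t₀..T, t * ‖v t‖ ^ 2 ≤ E t₀ / ε := by
    intro T hT
    have h := intervalIntegral.integral_le_sub_of_hasDeriv_right_of_le (a := t₀) (b := T)
      (g := fun t => - E t) (g' := fun t => - d t) (φ := fun t => ε * (t * ‖v t‖ ^ 2)) hT
      (fun t ht => ((hd1 t ht.1).neg.continuousWithinAt).mono (fun s hs => hs.1))
      (fun t ht => (hd1 t ht.1.le).neg.mono (fun s hs => le_trans ht.1.le (le_of_lt hs)))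
      (((hvc.mono (fun s hs => hs.1)).const_mul ε).integrableOn_Icc)
      (fun t ht => hd2 t ht.1.le)
    rw [intervalIntegral.integral_const_mul] at h
    rw [le_div_iff₀ hε]
    have := hE0 T hT
    linarith
  have hint : IntegrableOn (fun t => t * ‖v t‖ ^ 2) (Ioi t₀) := by
    refine integrableOn_Ioi_of_intervalIntegral_norm_bounded (E t₀ / ε) t₀ (b := fun T : ℝ => T)
      (l := atTop) (fun T => ?_) tendsto_id ?_
    · exact ((hvc.mono (fun s hs => hs.1)).integrableOn_Icc (b := T)).mono_set Ioc_subset_Icc_self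
    · filter_upwards [eventually_ge_atTop t₀] with T hT
      refine le_trans (le_of_eq ?_) (hbound T hT)
      refine intervalIntegral.integral_congr (fun t ht => ?_)
      rw [uIcc_of_le hT] at ht
      have htp : 0 < t := lt_of_lt_of_le ht₀ ht.1
      exact Real.norm_of_nonneg (by positivity)
  have hint2 : IntegrableOn (fun t => t * ‖v t‖ ^ 2) (Ici t₀) :=
    (integrableOn_Ici_iff_integrableOn_Ioi).2 hint
  exact hint2.lintegral_lt_top
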